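/- Let {A_n}_{n=1}^{n_s}, {B_n}_{n=1}^{n_s} be real L×L matrices forming an amicable orthogonal design, let s̄_1, s̃_1, …, s̄_{n_s}, s̃_{n_s} be real numbers, and set X = (1/√n_s) Σ_{n′=1}^{n_s} ( s̄_{n′} A_{n′} + i s̃_{n′} B_{n′} ). Then for every complex L×L Hermitian matrix H and every index n, Im( tr( B_n · X^H · H ) ) = −(s̃_n/√n_s) · Re( tr(H) ). -/

import Mathlib

open Matrix Complex

/-- An amicable orthogonal design: real `L × L` matrices `A n`, `B n` (`n = 1, …, n_s`)
satisfying conditions (34) of the paper. -/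
def IsAmicableDesign {L ns : ℕ} (A B : Fin ns → Matrix (Fin L) (Fin L) ℝ) : Prop :=
  (∀ n, A n * (A n)ᵀ = 1) ∧ (∀ n, B n * (B n)ᵀ = 1) ∧
  (∀ n n', n ≠ n' → A n * (A n')ᵀ = -(A n' * (A n)ᵀ)) ∧
  (∀ n n', n ≠ n' → B n * (B n')ᵀ = -(B n' * (B n)ᵀ)) ∧
  (∀ n n', A n * (B n')ᵀ = B n' * (A n)ᵀ)

/-- The space-time code matrix `X = (1/√n_s) Σ_n (s̄_n A_n + i s̃_n B_n)`, with the real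
matrices viewed as complex entrywise. -/
noncomputable def codeX {L ns : ℕ} (A B : Fin ns → Matrix (Fin L) (Fin L) ℝ)
    (sbar stil : Fin ns → ℝ) : Matrix (Fin L) (Fin L) ℂ :=
  ((Real.sqrt ns : ℂ))⁻¹ •
    ∑ n, ((sbar n : ℂ) • (A n).map Complex.ofReal
      + ((stil n : ℂ) * Complex.I) • (B n).map Complex.ofReal)

/-! For Hermitian `H`, `2 i Im (tr (P H)) = tr ((P - Pᴴ) H)`, so only the skew-Hermitian part of
`P = B_n Xᴴ` matters. In `B_n Xᴴ - X B_nᴴ` amicability cancels every `A`-term, the anticommutation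
relations cancel every `B`-term with index other than `n`, and `B_n B_nᴴ = 1` leaves a scalar
multiple of the identity. -/

/-- The linear dispersion code `∑ k, (a k • A k + i (b k) • B k)`, the shape of `codeX` for complex,
possibly rectangular matrices; any power normalization is absorbed into the real symbols `a`
and `b`. -/
noncomputable def linearDispersionCode {ι m l : Type*} [Fintype ι] (A B : ι → Matrix m l ℂ)
    (a b : ι → ℝ) : Matrix m l ℂ :=
  ∑ k, ((a k : ℂ) • A k + ((b k : ℂ) * I) • B k)

section

variable {ι m l p : Type*} [Fintype ι] [Fintype l]

lemma trace_sub_conjTranspose_mul [Fintype m] (P : Matrix m m ℂ) {H : Matrix m m ℂ}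
    (hH : H.IsHermitian) :
    trace ((P - Pᴴ) * H) = (2 * (trace (P * H)).im : ℝ) * I := by
  have hstar : trace (Pᴴ * H) = star (trace (P * H)) := by
    rw [← trace_conjTranspose, conjTranspose_mul, hH.eq, trace_mul_comm]
  rw [Matrix.sub_mul, trace_sub, hstar, Complex.star_def, Complex.sub_conj]

lemma linearDispersionCode_mul_conjTranspose (A B : ι → Matrix m l ℂ) (a b : ι → ℝ)
    (C : Matrix p l ℂ) :
    linearDispersionCode A B a b * Cᴴ
      = ∑ k, ((a k : ℂ) • (A k * Cᴴ) + ((b k : ℂ) * I) • (B k * Cᴴ)) := by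
  simp only [linearDispersionCode, Matrix.sum_mul, Matrix.add_mul, Matrix.smul_mul]

lemma mul_conjTranspose_linearDispersionCode (A B : ι → Matrix m l ℂ) (a b : ι → ℝ)
    (C : Matrix p l ℂ) :
    C * (linearDispersionCode A B a b)ᴴ
      = ∑ k, ((a k : ℂ) • (C * (A k)ᴴ) - ((b k : ℂ) * I) • (C * (B k)ᴴ)) := by
  simp [linearDispersionCode, conjTranspose_sum, Matrix.mul_sum, Matrix.mul_add, sub_eq_add_neg]

lemma mul_conjTranspose_linearDispersionCode_sub_conjTranspose [DecidableEq m]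
    {A B : ι → Matrix m l ℂ} {n : ι}
    (hAB : ∀ k, A k * (B n)ᴴ = B n * (A k)ᴴ) (hBn : B n * (B n)ᴴ = 1)
    (hB : ∀ k, k ≠ n → B n * (B k)ᴴ = -(B k * (B n)ᴴ)) (a b : ι → ℝ) :
    B n * (linearDispersionCode A B a b)ᴴ - (B n * (linearDispersionCode A B a b)ᴴ)ᴴ
      = -(2 * b n * I) • (1 : Matrix m m ℂ) := by
  rw [conjTranspose_mul, conjTranspose_conjTranspose, mul_conjTranspose_linearDispersionCode,
    linearDispersionCode_mul_conjTranspose, ← Finset.sum_sub_distrib]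
  have hterm (k : ι) :
      (a k : ℂ) • (B n * (A k)ᴴ) - ((b k : ℂ) * I) • (B n * (B k)ᴴ)
          - ((a k : ℂ) • (A k * (B n)ᴴ) + ((b k : ℂ) * I) • (B k * (B n)ᴴ))
        = -((b k : ℂ) * I) • (B n * (B k)ᴴ + B k * (B n)ᴴ) := by
    rw [hAB k]
    module
  simp only [hterm]
  rw [Finset.sum_eq_single_of_mem n (Finset.mem_univ n)
    fun k _ hk ↦ by rw [hB k hk, neg_add_cancel, smul_zero], hBn]
  module

theorem im_trace_Bn_codeX_conjTranspose_hermitian_general [Fintype m] [DecidableEq m]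
    {A B : ι → Matrix m l ℂ} {n : ι}
    (hAB : ∀ k, A k * (B n)ᴴ = B n * (A k)ᴴ) (hBn : B n * (B n)ᴴ = 1)
    (hB : ∀ k, k ≠ n → B n * (B k)ᴴ = -(B k * (B n)ᴴ)) (a b : ι → ℝ)
    {H : Matrix m m ℂ} (hH : H.IsHermitian) :
    (trace (B n * (linearDispersionCode A B a b)ᴴ * H)).im = -b n * (trace H).re := by
  have htrace := trace_sub_conjTranspose_mul (B n * (linearDispersionCode A B a b)ᴴ) hH
  rw [mul_conjTranspose_linearDispersionCode_sub_conjTranspose hAB hBn hB, Matrix.smul_mul,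
    Matrix.one_mul, trace_smul, smul_eq_mul] at htrace
  have him := congrArg Complex.im htrace
  rw [Complex.im_ofReal_mul, Complex.I_im, mul_one] at him
  have hskew : (-(2 * (b n : ℂ) * I) * trace H).im = -(2 * b n * (trace H).re) := by simp
  linarith

end

lemma map_ofReal_mul_conjTranspose_map_ofReal {m l p : Type*} [Fintype l] (P : Matrix m l ℝ)
    (Q : Matrix p l ℝ) :
    P.map Complex.ofReal * (Q.map Complex.ofReal)ᴴ = (P * Qᵀ).map Complex.ofReal := by
  rw [← conjTranspose_map _ fun x ↦ (Complex.conj_ofReal x).symm,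
    conjTranspose_eq_transpose_of_trivial]
  exact (Matrix.map_mul (f := Complex.ofRealHom)).symm

lemma codeX_eq_linearDispersionCode {L ns : ℕ} (A B : Fin ns → Matrix (Fin L) (Fin L) ℝ)
    (sbar stil : Fin ns → ℝ) :
    codeX A B sbar stil
      = linearDispersionCode (fun k ↦ (A k).map Complex.ofReal)
          (fun k ↦ (B k).map Complex.ofReal)
          (fun k ↦ sbar k / Real.sqrt ns) (fun k ↦ stil k / Real.sqrt ns) := by
  rw [codeX, linearDispersionCode, Finset.smul_sum]
  refine Finset.sum_congr rfl fun k _ ↦ ?_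
  push_cast
  module

namespace IsAmicableDesign

variable {L ns : ℕ} {A B : Fin ns → Matrix (Fin L) (Fin L) ℝ}

lemma map_ofReal_mul_conjTranspose_comm (hAB : IsAmicableDesign A B) (k n : Fin ns) :
    (A k).map Complex.ofReal * ((B n).map Complex.ofReal)ᴴ
      = (B n).map Complex.ofReal * ((A k).map Complex.ofReal)ᴴ := by
  obtain ⟨-, -, -, -, hamicable⟩ := hAB
  simp only [map_ofReal_mul_conjTranspose_map_ofReal, hamicable k n]

lemma map_ofReal_mul_conjTranspose_self (hAB : IsAmicableDesign A B) (n : Fin ns) :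
    (B n).map Complex.ofReal * ((B n).map Complex.ofReal)ᴴ = 1 := by
  obtain ⟨-, horthogonal, -⟩ := hAB
  rw [map_ofReal_mul_conjTranspose_map_ofReal, horthogonal n,
    Matrix.map_one _ Complex.ofReal_zero Complex.ofReal_one]

lemma map_ofReal_mul_conjTranspose_anticomm (hAB : IsAmicableDesign A B) {k n : Fin ns}
    (hkn : k ≠ n) :
    (B n).map Complex.ofReal * ((B k).map Complex.ofReal)ᴴ
      = -((B k).map Complex.ofReal * ((B n).map Complex.ofReal)ᴴ) := by
  obtain ⟨-, -, -, hanticomm, -⟩ := hAB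
  rw [map_ofReal_mul_conjTranspose_map_ofReal, map_ofReal_mul_conjTranspose_map_ofReal,
    hanticomm n k hkn.symm, Matrix.map_neg Complex.ofReal Complex.ofReal_neg]

end IsAmicableDesign

/-- Companion of Lemma 1: for an amicable orthogonal design and any Hermitian `H`,
`Im(tr(B_n Xᴴ H)) = -(s̃_n/√n_s) Re(tr H)`. -/
theorem im_trace_Bn_codeX_conjTranspose_hermitian {L ns : ℕ}
    (A B : Fin ns → Matrix (Fin L) (Fin L) ℝ) (hAB : IsAmicableDesign A B)
    (sbar stil : Fin ns → ℝ)
    (H : Matrix (Fin L) (Fin L) ℂ) (hH : Hᴴ = H) (n : Fin ns) :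
    (Matrix.trace ((B n).map Complex.ofReal * (codeX A B sbar stil)ᴴ * H)).im
      = -(stil n / Real.sqrt ns) * (Matrix.trace H).re := by
  rw [codeX_eq_linearDispersionCode]
  exact im_trace_Bn_codeX_conjTranspose_hermitian_general
    (B := fun k ↦ (B k).map Complex.ofReal) (fun k ↦ hAB.map_ofReal_mul_conjTranspose_comm k n)
    (hAB.map_ofReal_mul_conjTranspose_self n)
    (fun _ ↦ hAB.map_ofReal_mul_conjTranspose_anticomm) _ _ hH
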